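/- Let ℓ ≥ 2 and θ ∈ ℂ^(ℤ/ℓℤ) with Σ_{i ∈ ℤ/ℓℤ} θ_i ≠ 0, and let d ∈ ℕ^(ℤ/ℓℤ). Then d ∈ E_θ if and only if there exist an integer n ≥ 0 and θ′ ∈ ℂ^(ℤ/ℓℤ) such that (d, θ) ~ (n·δ_ℓ, θ′), where δ_ℓ ∈ ℤ^(ℤ/ℓℤ) is the vector with all entries 1. -/

import Mathlib

namespace CM

/-- The (non-linear) action of the simple reflection `s_j` on `ℤ^(ℤ/ℓℤ)`. -/
def sInt (ℓ : ℕ) (j : ZMod ℓ) (d : ZMod ℓ → ℤ) : ZMod ℓ → ℤ := fun i =>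
  if i = j then (if j = 0 then 1 else 0) + d (j + 1) + d (j - 1) - d j else d i

/-- The linear action of the simple reflection `s_j` on `ℂ^(ℤ/ℓℤ)`.
For `i ≠ j` the coefficient of `θ j` is the number of arrows between `i` and `j`
(which is `2` when `ℓ = 2`). -/
def sC (ℓ : ℕ) (j : ZMod ℓ) (θ : ZMod ℓ → ℂ) : ZMod ℓ → ℂ := fun i =>
  if i = j then -θ j
  else θ i + ((if i = j - 1 then 1 else 0) + (if i = j + 1 then 1 else 0) : ℂ) * θ j

/-- Transport along an equality of vertices. -/
def castMap {ℓ : ℕ} (d : ZMod ℓ → ℕ) {i j : ZMod ℓ} (h : i = j) :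
    (Fin (d i) → ℂ) →ₗ[ℂ] (Fin (d j) → ℂ) :=
  LinearMap.funLeft ℂ ℂ (Fin.cast (congrArg d h.symm))

/-- A framed `θ`-representation of the cyclic quiver with dimension vector `d`
(dimension `1` at the framing vertex `∞`).  The moment map relation at the vertex
`i + 1` reads `X_{i+1} ∘ Y_{i+1} - Y_i ∘ X_i + δ_{i+1,0} · x ∘ y = θ_{i+1} · id`. -/
structure FRep (ℓ : ℕ) (θ : ZMod ℓ → ℂ) (d : ZMod ℓ → ℕ) where
  X : ∀ i : ZMod ℓ, (Fin (d (i + 1)) → ℂ) →ₗ[ℂ] (Fin (d i) → ℂ)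
  Y : ∀ i : ZMod ℓ, (Fin (d i) → ℂ) →ₗ[ℂ] (Fin (d (i + 1)) → ℂ)
  x : ℂ →ₗ[ℂ] (Fin (d 0) → ℂ)
  y : (Fin (d 0) → ℂ) →ₗ[ℂ] ℂ
  rel : ∀ i : ZMod ℓ,
    X (i + 1) ∘ₗ Y (i + 1) - Y i ∘ₗ X i +
      (if h : i + 1 = (0 : ZMod ℓ) then castMap d h.symm ∘ₗ x ∘ₗ y ∘ₗ castMap d h else 0) =
    θ (i + 1) • LinearMap.id

/-- A subrepresentation of a framed representation. -/
structure FSubrep {ℓ : ℕ} {θ : ZMod ℓ → ℂ} {d : ZMod ℓ → ℕ} (R : FRep ℓ θ d) where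
  U : ∀ i : ZMod ℓ, Submodule ℂ (Fin (d i) → ℂ)
  Uinf : Submodule ℂ ℂ
  hX : ∀ i : ZMod ℓ, ∀ v ∈ U (i + 1), R.X i v ∈ U i
  hY : ∀ i : ZMod ℓ, ∀ v ∈ U i, R.Y i v ∈ U (i + 1)
  hx : ∀ z ∈ Uinf, R.x z ∈ U 0
  hy : ∀ v ∈ U 0, R.y v ∈ Uinf

/-- A framed representation is simple if its only subrepresentations are zero and itself. -/
def FSimple {ℓ : ℕ} {θ : ZMod ℓ → ℂ} {d : ZMod ℓ → ℕ} (R : FRep ℓ θ d) : Prop :=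
  ∀ S : FSubrep R,
    ((∀ i, S.U i = ⊥) ∧ S.Uinf = ⊥) ∨ ((∀ i, S.U i = ⊤) ∧ S.Uinf = ⊤)

/-- `E_θ`: the set of dimension vectors of simple framed `θ`-representations. -/
def Eset (ℓ : ℕ) (θ : ZMod ℓ → ℂ) : Set (ZMod ℓ → ℕ) :=
  {d | ∃ R : FRep ℓ θ d, FSimple R}

/-- One step of the equivalence: `(d, θ) ↦ (s_j(d), s_j(θ))` for some `j` with `θ_j ≠ 0`. -/
def MoveRel (ℓ : ℕ) (p q : (ZMod ℓ → ℤ) × (ZMod ℓ → ℂ)) : Prop :=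
  ∃ j : ZMod ℓ, p.2 j ≠ 0 ∧ q = (sInt ℓ j p.1, sC ℓ j p.2)

/-! A reflection functor turns a simple representation of weight `θ` and dimension vector `d` into
a simple one of weight `s_j θ` and dimension vector `s_j d` whenever `θ_j ≠ 0`. So membership in
`E_θ` is invariant under the equivalence, and descending along reflections that decrease `∑ i, d i`
leads to a simple representation whose `d` no admissible reflection decreases. If `θ_j = 0`,
simplicity makes the maps out of the vertex `j` jointly injective and the maps into it jointly
surjective, with composite zero, so `d` does not decrease under `s_j` either. Thus `d` satisfies
`2 d_j ≤ δ_{j,0} + d_{j+1} + d_{j-1}` for every `j`: it is convex along the cycle up to a defect of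
`1` at the vertex `0`, and integrality forces it to be constant. Conversely `n·δ_ℓ` is attained by a
simple representation built from a Calogero–Moser matrix with coupling `∑ i, θ i`, a sum that
reflections preserve. -/

section LinearAlgebra

variable {K : Type*} [Field K]

lemma finrank_submodule_pi {ι : Type*} [Fintype ι] {M : ι → Type*} [∀ i, AddCommGroup (M i)]
    [∀ i, Module K (M i)] [∀ i, FiniteDimensional K (M i)] (p : ∀ i, Submodule K (M i)) :
    Module.finrank K (Submodule.pi Set.univ p) = ∑ i, Module.finrank K (p i) := by
  have hrange : LinearMap.range (LinearMap.piMap fun i => (p i).subtype) =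
      Submodule.pi Set.univ p := by
    ext w
    refine ⟨?_, fun hw => ⟨fun i => ⟨w i, hw i (Set.mem_univ i)⟩, rfl⟩⟩
    rintro ⟨v, rfl⟩ i -
    exact (v i).2
  have hinj : Function.Injective (LinearMap.piMap fun i => (p i).subtype) :=
    Function.Injective.piMap fun i => (p i).subtype_injective
  rw [← hrange, LinearMap.finrank_range_of_inj hinj, Module.finrank_pi_fintype]

lemma finrank_map_add_finrank_inf_ker {M N : Type*} [AddCommGroup M] [Module K M]
    [AddCommGroup N] [Module K N] (p : Submodule K M) [FiniteDimensional K p] (f : M →ₗ[K] N) :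
    Module.finrank K (p.map f) + Module.finrank K (p ⊓ LinearMap.ker f : Submodule K M) =
      Module.finrank K p := by
  rw [← Submodule.map_comap_subtype, Submodule.finrank_map_subtype_eq, ← LinearMap.ker_domRestrict,
    ← LinearMap.range_domRestrict, LinearMap.finrank_range_add_finrank_ker]

lemma finrank_map_of_injective {M N : Type*} [AddCommGroup M] [Module K M]
    [AddCommGroup N] [Module K N] {f : M →ₗ[K] N} (hf : Function.Injective f)
    (p : Submodule K M) : Module.finrank K (p.map f) = Module.finrank K p :=
  (Submodule.equivMapOfInjective f hf p).finrank_eq.symm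

end LinearAlgebra

/-- The double of a quiver with vertex set `I`. Its arrow set `H` carries the reversal `bar`, and
`sign` tells the arrows of the original quiver from their reverses. -/
structure DoubleQuiver (I H : Type*) where
  src : H → I
  bar : H → H
  bar_bar : ∀ h, bar (bar h) = h
  sign : H → ℤˣ
  sign_bar : ∀ h, sign (bar h) = -sign h

namespace DoubleQuiver

variable {I H : Type*} (Q : DoubleQuiver I H)

/-- The target of an arrow, encoded as the source of its reverse. -/
def tgt (h : H) : I := Q.src (Q.bar h)

lemma tgt_bar (h : H) : Q.tgt (Q.bar h) = Q.src h := by rw [tgt, bar_bar]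

/-- No arrow is a loop at the vertex `j`. -/
def LoopFree (j : I) : Prop := ∀ h, Q.tgt h = j → Q.src h ≠ j

variable [DecidableEq I]

section Reflections

variable [Fintype H] (j : I)

/-- The simple reflection at `j` on dimension vectors. -/
def reflectDim (d : I → ℤ) : I → ℤ :=
  Function.update d j (∑ h with Q.tgt h = j, d (Q.src h) - d j)

/-- The simple reflection at `j` on weights, dual to `reflectDim`. -/
def reflectWeight {K : Type*} [Field K] (lam : I → K) : I → K :=
  Function.update
    (fun i => lam i + ({h | Q.tgt h = i ∧ Q.src h = j} : Finset H).card * lam j) j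
    (-lam j)

end Reflections

variable {K E : Type*} [Field K] [AddCommGroup E] [Module K E]

/-- The sum of the spaces `U (src h)` over the arrows `h` into `j`. It is realised inside `H → E`,
the coordinates at the other arrows being zero. -/
def star (j : I) (U : I → Submodule K E) : Submodule K (H → E) :=
  Submodule.pi Set.univ fun h => if Q.tgt h = j then U (Q.src h) else ⊥

variable {Q} {j : I} {U V : I → Submodule K E} {w : H → E}

lemma mem_star : w ∈ Q.star j U ↔
    (∀ h, Q.tgt h = j → w h ∈ U (Q.src h)) ∧ ∀ h, Q.tgt h ≠ j → w h = 0 := by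
  simp only [star, Submodule.mem_pi, Set.mem_univ, true_imp_iff, ← forall_and]
  refine forall_congr' fun h => ?_
  by_cases hj : Q.tgt h = j <;> simp [hj]

lemma single_mem_star [DecidableEq H] {h : H} (hh : Q.tgt h = j) {v : E} (hv : v ∈ U (Q.src h)) :
    Pi.single h v ∈ Q.star j U := by
  refine mem_star.2 ⟨fun k _ => ?_, fun k hk => ?_⟩
  · obtain rfl | hkh := eq_or_ne k h
    · simpa using hv
    · simp [hkh]
  · rw [Pi.single_eq_of_ne fun hkh : k = h => hk (hkh ▸ hh)]

lemma star_mono (hj : Q.LoopFree j) (hUV : ∀ i ≠ j, U i ≤ V i) : Q.star j U ≤ Q.star j V :=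
  fun _ hw => mem_star.2
    ⟨fun h hh => hUV _ (hj h hh) ((mem_star.1 hw).1 h hh), (mem_star.1 hw).2⟩

lemma star_bot : Q.star j (⊥ : I → Submodule K E) = ⊥ := by
  simp [star, Pi.bot_apply]

lemma finrank_star [Fintype H] [FiniteDimensional K E] :
    Module.finrank K (Q.star j U) = ∑ h with Q.tgt h = j, Module.finrank K (U (Q.src h)) := by
  rw [star, finrank_submodule_pi, Finset.sum_filter]
  refine Finset.sum_congr rfl fun h _ => ?_
  by_cases hh : Q.tgt h = j
  · rw [if_pos hh, if_pos hh]
  · rw [if_neg hh, if_neg hh, finrank_bot]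

end DoubleQuiver

/-- A representation of the deformed preprojective algebra of weight `lam`: the doubled quiver
acts subject to the moment map relation at every vertex. The spaces at the vertices are subspaces,
not assumed independent, of one ambient space `E`; only the restriction of `map h` to
`space (src h)` matters. -/
structure PreprojectiveRep {I H : Type*} [DecidableEq I] [Fintype H] (Q : DoubleQuiver I H)
    {K : Type*} [Field K] (lam : I → K) (E : Type*) [AddCommGroup E] [Module K E] where
  space : I → Submodule K E
  map : H → E →ₗ[K] E
  map_mem : ∀ h, ∀ v ∈ space (Q.src h), map h v ∈ space (Q.tgt h)
  moment : ∀ i, ∀ v ∈ space i,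
    ∑ h with Q.tgt h = i, Q.sign h • map h (map (Q.bar h) v) = lam i • v

namespace PreprojectiveRep

variable {I H : Type*} [DecidableEq I] [Fintype H] {Q : DoubleQuiver I H}
  {K : Type*} [Field K] {lam : I → K} {E : Type*} [AddCommGroup E] [Module K E]

/-- Subrepresentations of `R`. -/
structure IsSub (R : PreprojectiveRep Q lam E) (U : I → Submodule K E) : Prop where
  le : U ≤ R.space
  map_mem : ∀ h, ∀ v ∈ U (Q.src h), R.map h v ∈ U (Q.tgt h)

/-- Simplicity, with the convention of `FSimple`: the zero representation qualifies. -/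
def IsSimple (R : PreprojectiveRep Q lam E) : Prop :=
  ∀ U, R.IsSub U → U = ⊥ ∨ U = R.space

variable (R : PreprojectiveRep Q lam E) {U : I → Submodule K E} {j : I}

lemma isSub_space : R.IsSub R.space := ⟨le_rfl, R.map_mem⟩

/-- The signed sum of all incoming maps. On `Q.star j R.space` it is the map into the space at
`j`. -/
def inn : (H → E) →ₗ[K] E := ∑ h, Q.sign h • R.map h ∘ₗ LinearMap.proj h

variable (j) in
/-- The collection of the maps leaving `j`, the one along `h` being stored at `bar h`. -/
def out : E →ₗ[K] (H → E) :=
  LinearMap.pi fun h => if Q.tgt h = j then R.map (Q.bar h) else 0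

lemma inn_apply (w : H → E) : R.inn w = ∑ h, Q.sign h • R.map h (w h) := by
  simp [inn]

lemma inn_single [DecidableEq H] (h : H) (v : E) :
    R.inn (Pi.single h v) = Q.sign h • R.map h v := by
  rw [inn_apply, Finset.sum_eq_single h (fun k _ hk => by simp [hk]) (by simp), Pi.single_eq_same]

lemma out_of_tgt {h : H} (hh : Q.tgt h = j) (v : E) : R.out j v h = R.map (Q.bar h) v := by
  simp [out, hh]

lemma out_of_tgt_ne {h : H} (hh : Q.tgt h ≠ j) (v : E) : R.out j v h = 0 := by
  simp [out, hh]

lemma inn_out {v : E} (hv : v ∈ R.space j) : R.inn (R.out j v) = lam j • v := by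
  rw [inn_apply, ← R.moment j v hv, Finset.sum_filter]
  refine Finset.sum_congr rfl fun h _ => ?_
  split_ifs with hh
  · rw [R.out_of_tgt hh]
  · rw [R.out_of_tgt_ne hh, map_zero, smul_zero]

variable {R}

lemma IsSub.inn_mem (hU : R.IsSub U) {w : H → E} (hw : w ∈ Q.star j U) : R.inn w ∈ U j := by
  rw [inn_apply]
  refine sum_mem fun h _ => (U j).smul_mem_iff' (Q.sign h) |>.2 ?_
  obtain rfl | hh := eq_or_ne (Q.tgt h) j
  · exact hU.map_mem h _ ((DoubleQuiver.mem_star.1 hw).1 h rfl)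
  · rw [(DoubleQuiver.mem_star.1 hw).2 h hh, map_zero]
    exact zero_mem _

lemma IsSub.out_mem (hU : R.IsSub U) {v : E} (hv : v ∈ U j) : R.out j v ∈ Q.star j U := by
  refine DoubleQuiver.mem_star.2 ⟨fun h hh => ?_, fun h hh => R.out_of_tgt_ne hh v⟩
  rw [R.out_of_tgt hh, ← Q.tgt_bar]
  subst hh
  exact hU.map_mem (Q.bar h) v hv

lemma IsSub.update (hj : Q.LoopFree j) (hU : ∀ i ≠ j, U i ≤ R.space i) {S : Submodule K E}
    (hS : S ≤ R.space j)
    (hmap : ∀ h, Q.src h ≠ j → Q.tgt h ≠ j → ∀ v ∈ U (Q.src h), R.map h v ∈ U (Q.tgt h))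
    (hinn : ∀ w ∈ Q.star j U, R.inn w ∈ S) (hout : ∀ v ∈ S, R.out j v ∈ Q.star j U) :
    R.IsSub (Function.update U j S) := by
  classical
  refine ⟨update_le_iff.2 ⟨hS, hU⟩, fun h v hv => ?_⟩
  by_cases ht : Q.tgt h = j
  · have hs := hj h ht
    rw [Function.update_of_ne hs] at hv
    have := hinn _ (DoubleQuiver.single_mem_star ht hv)
    rw [inn_single, S.smul_mem_iff'] at this
    rwa [ht, Function.update_self]
  · rw [Function.update_of_ne ht]
    by_cases hs : Q.src h = j
    · rw [hs, Function.update_self] at hv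
      have hb : Q.tgt (Q.bar h) = j := (Q.tgt_bar h).trans hs
      have := (DoubleQuiver.mem_star.1 (hout v hv)).1 _ hb
      rwa [R.out_of_tgt hb, Q.bar_bar] at this
    · rw [Function.update_of_ne hs] at hv
      exact hmap h hs ht v hv

section VanishingWeight

/-! ### The dimension inequality at a vertex of weight zero -/

lemma IsSimple.map_inn_star (hR : R.IsSimple) (hj : Q.LoopFree j) {k : I} (hk : k ≠ j)
    (hk0 : R.space k ≠ ⊥) : (Q.star j R.space).map R.inn = R.space j := by
  have hle : (Q.star j R.space).map R.inn ≤ R.space j := by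
    rintro _ ⟨w, hw, rfl⟩
    exact R.isSub_space.inn_mem hw
  have hsub : R.IsSub (Function.update R.space j ((Q.star j R.space).map R.inn)) :=
    .update hj (fun _ _ => le_rfl) hle (fun h _ _ => R.map_mem h)
      (fun w hw => ⟨w, hw, rfl⟩) (fun v hv => R.isSub_space.out_mem (hle hv))
  rcases hR _ hsub with h | h
  · exact absurd (by simpa [hk] using congrFun h k) hk0
  · simpa using congrFun h j

lemma IsSimple.disjoint_ker_out (hR : R.IsSimple) (hj : Q.LoopFree j) {k : I} (hk : k ≠ j)
    (hk0 : R.space k ≠ ⊥) : Disjoint (R.space j) (LinearMap.ker (R.out j)) := by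
  have hsub : R.IsSub (Function.update ⊥ j (R.space j ⊓ LinearMap.ker (R.out j))) := by
    refine .update (U := ⊥) hj (fun _ _ => bot_le) inf_le_left (fun h _ _ v hv => ?_)
      (fun w hw => ?_) fun v hv => ?_
    · rw [(Submodule.mem_bot K).1 hv, map_zero]
      exact zero_mem _
    · rw [DoubleQuiver.star_bot, Submodule.mem_bot] at hw
      rw [hw, map_zero]
      exact zero_mem _
    · rw [LinearMap.mem_ker.1 hv.2]
      exact zero_mem _
  rcases hR _ hsub with h | h
  · exact disjoint_iff.2 (by simpa using congrFun h j)
  · exact absurd (by simpa [hk] using (congrFun h k).symm) hk0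

lemma IsSimple.two_mul_finrank_le [FiniteDimensional K E] (hR : R.IsSimple) (hj : Q.LoopFree j)
    (hlam : lam j = 0) {k : I} (hk : k ≠ j) (hk0 : R.space k ≠ ⊥) :
    2 * Module.finrank K (R.space j) ≤
      ∑ h with Q.tgt h = j, Module.finrank K (R.space (Q.src h)) := by
  have hle : (R.space j).map (R.out j) ≤ Q.star j R.space ⊓ LinearMap.ker R.inn := by
    rintro _ ⟨v, hv, rfl⟩
    exact ⟨R.isSub_space.out_mem hv,
      LinearMap.mem_ker.2 (by rw [R.inn_out hv, hlam, zero_smul])⟩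
  have hout := finrank_map_add_finrank_inf_ker (R.space j) (R.out j)
  rw [(hR.disjoint_ker_out hj hk hk0).eq_bot, finrank_bot] at hout
  have hinn := finrank_map_add_finrank_inf_ker (Q.star j R.space) R.inn
  rw [hR.map_inn_star hj hk hk0, DoubleQuiver.finrank_star] at hinn
  have := Submodule.finrank_mono hle
  omega

end VanishingWeight

section Reflection

/-! ### The reflection functor -/

variable (R j)

/-- The map `w ↦ out (inn w) - lam j • w`, through which the space at `j` of the reflected
representation receives the spaces at its neighbours. -/
def twist : (H → E) →ₗ[K] (H → E) := R.out j ∘ₗ R.inn - lam j • LinearMap.id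

/-- The spaces of the reflection of `R` at `j`. Inside `E × (H → E)` the first factor carries the
unchanged spaces, and the second one the kernel of `inn` that replaces the space at `j`. -/
def reflectSpace : I → Submodule K (E × (H → E)) :=
  Function.update (fun i => (R.space i).prod ⊥) j
    ((⊥ : Submodule K E).prod (Q.star j R.space ⊓ LinearMap.ker R.inn))

/-- The maps of the reflection of `R` at `j`. -/
def reflectMap [DecidableEq H] (h : H) : E × (H → E) →ₗ[K] E × (H → E) :=
  if Q.tgt h = j then
    Q.sign h • LinearMap.inr K E (H → E) ∘ₗ R.twist j ∘ₗ LinearMap.single K _ h ∘ₗ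
      LinearMap.fst K _ _
  else if Q.src h = j then
    LinearMap.inl K E (H → E) ∘ₗ LinearMap.proj (Q.bar h) ∘ₗ LinearMap.snd K _ _
  else LinearMap.inl K E (H → E) ∘ₗ R.map h ∘ₗ LinearMap.fst K _ _

variable {R j}

lemma twist_apply (w : H → E) : R.twist j w = R.out j (R.inn w) - lam j • w := rfl

lemma twist_of_inn_eq_zero {w : H → E} (hw : R.inn w = 0) : R.twist j w = -lam j • w := by
  rw [twist_apply, hw, map_zero, zero_sub, neg_smul]

lemma inn_twist {w : H → E} (hw : w ∈ Q.star j R.space) : R.inn (R.twist j w) = 0 := by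
  rw [twist_apply, map_sub, map_smul, R.inn_out (R.isSub_space.inn_mem hw), sub_self]

lemma twist_mem_star {w : H → E} (hw : w ∈ Q.star j R.space) : R.twist j w ∈ Q.star j R.space :=
  sub_mem (R.isSub_space.out_mem (R.isSub_space.inn_mem hw)) (Submodule.smul_mem _ _ hw)

lemma mem_reflectSpace_self {v : E × (H → E)} :
    v ∈ R.reflectSpace j j ↔ v.1 = 0 ∧ v.2 ∈ Q.star j R.space ∧ R.inn v.2 = 0 := by
  rw [reflectSpace, Function.update_self]
  rfl

lemma mem_reflectSpace_of_ne {i : I} (hi : i ≠ j) {v : E × (H → E)} :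
    v ∈ R.reflectSpace j i ↔ v.1 ∈ R.space i ∧ v.2 = 0 := by
  rw [reflectSpace, Function.update_of_ne hi]
  rfl

lemma finrank_reflectSpace_self [FiniteDimensional K E] (hlam : lam j ≠ 0) :
    Module.finrank K (R.space j) + Module.finrank K (R.reflectSpace j j) =
      ∑ h with Q.tgt h = j, Module.finrank K (R.space (Q.src h)) := by
  have hsurj : (Q.star j R.space).map R.inn = R.space j := by
    refine le_antisymm ?_ fun v hv => ⟨R.out j ((lam j)⁻¹ • v), ?_, ?_⟩
    · rintro _ ⟨w, hw, rfl⟩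
      exact R.isSub_space.inn_mem hw
    · exact R.isSub_space.out_mem (Submodule.smul_mem _ _ hv)
    · rw [R.inn_out (Submodule.smul_mem _ _ hv), smul_inv_smul₀ hlam]
  have hinr : R.reflectSpace j j =
      (Q.star j R.space ⊓ LinearMap.ker R.inn).map (LinearMap.inr K E (H → E)) := by
    rw [reflectSpace, Function.update_self, Submodule.map_inr]
  rw [hinr, finrank_map_of_injective LinearMap.inr_injective, ← DoubleQuiver.finrank_star,
    ← finrank_map_add_finrank_inf_ker (Q.star j R.space) R.inn, hsurj]

lemma finrank_reflectSpace_of_ne {i : I} (hi : i ≠ j) :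
    Module.finrank K (R.reflectSpace j i) = Module.finrank K (R.space i) := by
  rw [reflectSpace, Function.update_of_ne hi, ← Submodule.map_inl,
    finrank_map_of_injective LinearMap.inl_injective]

variable [DecidableEq H]

lemma twist_single_same {h : H} (hh : Q.tgt h = j) (v : E) :
    R.twist j (Pi.single h v) h = Q.sign h • R.map (Q.bar h) (R.map h v) - lam j • v := by
  rw [twist_apply, Pi.sub_apply, R.out_of_tgt hh, inn_single, LinearMap.map_smul_of_tower,
    Pi.smul_apply, Pi.single_eq_same]

lemma reflectMap_of_tgt {h : H} (hh : Q.tgt h = j) (v : E × (H → E)) :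
    R.reflectMap j h v = (0, Q.sign h • R.twist j (Pi.single h v.1)) := by
  simp [reflectMap, hh]

lemma reflectMap_of_src (hj : Q.LoopFree j) {h : H} (hh : Q.src h = j) (v : E × (H → E)) :
    R.reflectMap j h v = (v.2 (Q.bar h), 0) := by
  rw [reflectMap, if_neg fun ht => hj h ht hh, if_pos hh]
  rfl

lemma reflectMap_of_ne {h : H} (hs : Q.src h ≠ j) (ht : Q.tgt h ≠ j) (v : E × (H → E)) :
    R.reflectMap j h v = (R.map h v.1, 0) := by
  simp [reflectMap, hs, ht]

lemma reflectMap_mem (hj : Q.LoopFree j) (h : H) (v : E × (H → E))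
    (hv : v ∈ R.reflectSpace j (Q.src h)) : R.reflectMap j h v ∈ R.reflectSpace j (Q.tgt h) := by
  by_cases ht : Q.tgt h = j
  · rw [mem_reflectSpace_of_ne (hj h ht)] at hv
    have hstar := DoubleQuiver.single_mem_star ht hv.1
    rw [reflectMap_of_tgt ht, ht, mem_reflectSpace_self]
    refine ⟨rfl, (Submodule.smul_mem_iff' _ _).2 (twist_mem_star hstar), ?_⟩
    rw [LinearMap.map_smul_of_tower, inn_twist hstar, smul_zero]
  · rw [mem_reflectSpace_of_ne ht]
    by_cases hs : Q.src h = j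
    · rw [hs, mem_reflectSpace_self] at hv
      have hb : Q.tgt (Q.bar h) = j := (Q.tgt_bar h).trans hs
      rw [reflectMap_of_src hj hs]
      exact ⟨(DoubleQuiver.mem_star.1 hv.2.1).1 _ hb, rfl⟩
    · rw [mem_reflectSpace_of_ne hs] at hv
      rw [reflectMap_of_ne hs ht]
      exact ⟨R.map_mem h _ hv.1, rfl⟩

lemma reflectMap_moment_self (hj : Q.LoopFree j) {v : E × (H → E)} (hv : v ∈ R.reflectSpace j j) :
    ∑ h with Q.tgt h = j, Q.sign h • R.reflectMap j h (R.reflectMap j (Q.bar h) v) =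
      -lam j • v := by
  obtain ⟨hv1, hstar, hinn⟩ := mem_reflectSpace_self.1 hv
  have hterm (h : H) (hh : Q.tgt h = j) :
      Q.sign h • R.reflectMap j h (R.reflectMap j (Q.bar h) v) =
        (0, R.twist j (Pi.single h (v.2 h))) := by
    rw [reflectMap_of_src (h := Q.bar h) hj hh, Q.bar_bar, reflectMap_of_tgt hh, Prod.smul_mk,
      smul_zero, smul_smul, Int.units_mul_self, one_smul]
  have hsum : ∑ h with Q.tgt h = j, Pi.single h (v.2 h) = v.2 := by
    rw [Finset.sum_filter_of_ne, Finset.univ_sum_single]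
    intro h _ hne
    by_contra hh
    exact hne (by rw [(DoubleQuiver.mem_star.1 hstar).2 h hh, Pi.single_zero])
  rw [Finset.sum_congr rfl fun h hh => hterm h (Finset.mem_filter.1 hh).2]
  refine Prod.ext ?_ ?_
  · simp [Prod.fst_sum, hv1]
  · rw [Prod.snd_sum, ← map_sum, hsum, twist_of_inn_eq_zero hinn, Prod.smul_snd]

lemma reflectMap_moment_of_ne (hj : Q.LoopFree j) {i : I} (hi : i ≠ j) {v : E × (H → E)}
    (hv : v ∈ R.reflectSpace j i) :
    ∑ h with Q.tgt h = i, Q.sign h • R.reflectMap j h (R.reflectMap j (Q.bar h) v) =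
      Q.reflectWeight j lam i • v := by
  obtain ⟨hv1, hv2⟩ := (mem_reflectSpace_of_ne hi).1 hv
  have hterm (h : H) (hh : Q.tgt h = i) :
      Q.sign h • R.reflectMap j h (R.reflectMap j (Q.bar h) v) =
        (Q.sign h • R.map h (R.map (Q.bar h) v.1) + if Q.src h = j then lam j • v.1 else 0, 0) := by
    have ht : Q.tgt h ≠ j := hh ▸ hi
    split_ifs with hs
    · have hb : Q.tgt (Q.bar h) = j := (Q.tgt_bar h).trans hs
      rw [reflectMap_of_src hj hs, reflectMap_of_tgt hb, Prod.smul_mk, smul_zero]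
      dsimp only
      rw [Pi.smul_apply, twist_single_same hb, Q.bar_bar, smul_sub, smul_smul (Q.sign (Q.bar h)),
        Int.units_mul_self, one_smul, smul_sub, Q.sign_bar, Units.neg_smul, smul_neg, smul_smul,
        Int.units_mul_self, one_smul, sub_neg_eq_add]
    · have hs' : Q.tgt (Q.bar h) ≠ j := by rwa [Q.tgt_bar]
      rw [reflectMap_of_ne (h := Q.bar h) ht hs', reflectMap_of_ne hs ht, Prod.smul_mk, smul_zero,
        add_zero]
  rw [Finset.sum_congr rfl fun h hh => hterm h (Finset.mem_filter.1 hh).2]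
  refine Prod.ext ?_ ?_
  · rw [Prod.fst_sum, Finset.sum_add_distrib, R.moment i _ hv1, ← Finset.sum_filter,
      Finset.sum_const, Finset.filter_filter, DoubleQuiver.reflectWeight, Function.update_of_ne hi,
      Prod.smul_fst, add_smul, mul_smul, Nat.cast_smul_eq_nsmul]
  · simp [Prod.snd_sum, hv2]

variable (R) in
/-- The reflection of `R` at a loop-free vertex `j`. -/
def reflect (hj : Q.LoopFree j) : PreprojectiveRep Q (Q.reflectWeight j lam) (E × (H → E)) where
  space := R.reflectSpace j
  map := R.reflectMap j
  map_mem := reflectMap_mem hj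
  moment i v hv := by
    obtain rfl | hi := eq_or_ne i j
    · rw [reflectMap_moment_self hj hv, DoubleQuiver.reflectWeight, Function.update_self]
    · exact reflectMap_moment_of_ne hj hi hv

section Simple

variable {hj : Q.LoopFree j} {U : I → Submodule K (E × (H → E))}

/-- The trace of a family of subspaces of the reflected representation on the spaces of `R`
away from `j`. -/
def unreflect (U : I → Submodule K (E × (H → E))) (i : I) : Submodule K E :=
  (U i).comap (LinearMap.inl K E (H → E))

lemma unreflect_le (hU : (R.reflect hj).IsSub U) {i : I} (hi : i ≠ j) :
    unreflect U i ≤ R.space i :=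
  fun _ hv => ((mem_reflectSpace_of_ne hi).1 (hU.le i hv)).1

lemma snd_mem_star_unreflect (hU : (R.reflect hj).IsSub U) {v : E × (H → E)} (hv : v ∈ U j) :
    v.2 ∈ Q.star j (unreflect U) := by
  have hstar := (mem_reflectSpace_self.1 (hU.le j hv)).2.1
  refine DoubleQuiver.mem_star.2 ⟨fun h hh => ?_, (DoubleQuiver.mem_star.1 hstar).2⟩
  have := (DoubleQuiver.mem_star.1 (hU.out_mem hv)).1 h hh
  rw [out_of_tgt _ hh] at this
  change R.reflectMap j (Q.bar h) v ∈ _ at this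
  rwa [reflectMap_of_src (h := Q.bar h) hj hh, Q.bar_bar] at this

lemma twist_mem (hU : (R.reflect hj).IsSub U) {w : H → E}
    (hw : w ∈ Q.star j (unreflect U)) : (0, R.twist j w) ∈ U j := by
  obtain ⟨hmem, hzero⟩ := DoubleQuiver.mem_star.1 hw
  have hsum : ((0 : E), R.twist j w) = ∑ h, ((0 : E), R.twist j (Pi.single h (w h))) := by
    refine Prod.ext ?_ ?_
    · simp [Prod.fst_sum]
    · rw [Prod.snd_sum, ← map_sum, Finset.univ_sum_single]
  rw [hsum]
  refine sum_mem fun h _ => ?_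
  by_cases hh : Q.tgt h = j
  · have := hU.map_mem h _ (hmem h hh)
    change R.reflectMap j h (w h, 0) ∈ _ at this
    have hsmul := ((U j).smul_mem_iff' (Q.sign h)).2 (hh ▸ this)
    rwa [reflectMap_of_tgt hh, Prod.smul_mk, smul_zero, smul_smul, Int.units_mul_self,
      one_smul] at hsmul
  · rw [hzero h hh, Pi.single_zero, map_zero]
    exact zero_mem _

lemma IsSub.unreflect (hU : (R.reflect hj).IsSub U) :
    R.IsSub (Function.update (unreflect U) j ((Q.star j (unreflect U)).map R.inn)) := by
  refine .update hj (fun _ => unreflect_le hU) ?_ ?_ (fun w hw => ⟨w, hw, rfl⟩) ?_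
  · rintro _ ⟨w, hw, rfl⟩
    exact R.isSub_space.inn_mem (DoubleQuiver.star_mono hj (fun _ => unreflect_le hU) hw)
  · intro h hs ht v hv
    have := hU.map_mem h _ hv
    change R.reflectMap j h (v, 0) ∈ _ at this
    rwa [reflectMap_of_ne hs ht] at this
  · rintro _ ⟨w, hw, rfl⟩
    have htwist := snd_mem_star_unreflect hU (twist_mem hU hw)
    rw [← sub_add_cancel (R.out j (R.inn w)) (lam j • w)]
    exact add_mem htwist (Submodule.smul_mem _ _ hw)

lemma IsSimple.reflect (hR : R.IsSimple) (hlam : lam j ≠ 0) : (R.reflect hj).IsSimple := by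
  intro U hU
  rcases hR _ hU.unreflect with hbot | htop
  · left
    have hP (i : I) (hi : i ≠ j) : unreflect U i = ⊥ := by
      simpa [hi] using congrFun hbot i
    have hstar : Q.star j (unreflect U) ≤ ⊥ :=
      (DoubleQuiver.star_mono (V := ⊥) hj fun i hi => (hP i hi).le).trans
        DoubleQuiver.star_bot.le
    refine funext fun i => (Submodule.eq_bot_iff _).2 fun v hv => ?_
    obtain rfl | hi := eq_or_ne i j
    · exact Prod.ext (mem_reflectSpace_self.1 (hU.le i hv)).1
        (hstar (snd_mem_star_unreflect hU hv))
    · have hv2 := ((mem_reflectSpace_of_ne hi).1 (hU.le i hv)).2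
      have hv1 : v.1 ∈ unreflect U i := show (v.1, 0) ∈ U i by rwa [← hv2]
      rw [hP i hi, Submodule.mem_bot] at hv1
      exact Prod.ext hv1 hv2
  · right
    have hP (i : I) (hi : i ≠ j) : unreflect U i = R.space i := by
      simpa [hi] using congrFun htop i
    refine le_antisymm hU.le fun i v hv => ?_
    obtain rfl | hi := eq_or_ne i j
    · obtain ⟨hv1, hstar, hinn⟩ := mem_reflectSpace_self.1 hv
      have := twist_mem hU (DoubleQuiver.star_mono hj (fun k hk => (hP k hk).ge) hstar)
      rw [twist_of_inn_eq_zero hinn, ← smul_zero (-lam i), ← Prod.smul_mk, ← hv1,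
        Submodule.smul_mem_iff _ (neg_ne_zero.2 hlam)] at this
      exact this
    · obtain ⟨hv1, hv2⟩ := (mem_reflectSpace_of_ne hi).1 hv
      rw [← hP i hi] at hv1
      change (v.1, 0) ∈ U i at hv1
      rwa [← hv2] at hv1

end Simple

end Reflection

end PreprojectiveRep

section HasSimple

universe u

variable {I K : Type*} {H : Type u} [DecidableEq I] [Fintype H] [Field K]

/-- There is a simple representation of weight `lam` whose dimension vector is `d`. The entries of
`d` are integers so that reflections act without truncation. -/
def HasSimple (Q : DoubleQuiver I H) (lam : I → K) (d : I → ℤ) : Prop :=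
  ∃ (E : Type u) (_ : AddCommGroup E) (_ : Module K E) (_ : FiniteDimensional K E)
    (R : PreprojectiveRep Q lam E), R.IsSimple ∧ ∀ i, (Module.finrank K (R.space i) : ℤ) = d i

variable {Q : DoubleQuiver I H} {lam : I → K} {d : I → ℤ} {j : I}

lemma HasSimple.nonneg (hd : HasSimple Q lam d) (i : I) : 0 ≤ d i := by
  obtain ⟨E, _, _, _, R, -, hdim⟩ := hd
  exact hdim i ▸ Int.natCast_nonneg _

lemma HasSimple.reflect (hd : HasSimple Q lam d) (hj : Q.LoopFree j) (hlam : lam j ≠ 0) :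
    HasSimple Q (Q.reflectWeight j lam) (Q.reflectDim j d) := by
  classical
  obtain ⟨E, _, _, _, R, hR, hdim⟩ := hd
  refine ⟨E × (H → E), _, _, inferInstance, R.reflect hj, hR.reflect hlam, fun i => ?_⟩
  rw [DoubleQuiver.reflectDim]
  obtain rfl | hi := eq_or_ne i j
  · rw [Function.update_self, ← hdim i, ← Finset.sum_congr rfl fun h _ => hdim (Q.src h)]
    have : Module.finrank K (R.space i) + Module.finrank K ((R.reflect hj).space i) =
        ∑ h with Q.tgt h = i, Module.finrank K (R.space (Q.src h)) :=
      PreprojectiveRep.finrank_reflectSpace_self hlam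
    push_cast [← Nat.cast_sum, ← this]
    exact (add_sub_cancel_left _ _).symm
  · rw [Function.update_of_ne hi, ← hdim i]
    exact congrArg Nat.cast (PreprojectiveRep.finrank_reflectSpace_of_ne hi)

lemma HasSimple.two_mul_le (hd : HasSimple Q lam d) (hj : Q.LoopFree j) (hlam : lam j = 0)
    {k : I} (hk : k ≠ j) (hdk : d k ≠ 0) : 2 * d j ≤ ∑ h with Q.tgt h = j, d (Q.src h) := by
  obtain ⟨E, _, _, _, R, hR, hdim⟩ := hd
  have hk0 : R.space k ≠ ⊥ := fun h => hdk (by rw [← hdim k, h, finrank_bot, Nat.cast_zero])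
  rw [← hdim j, ← Finset.sum_congr rfl fun h _ => hdim (Q.src h)]
  exact_mod_cast hR.two_mul_finrank_le hj hlam hk hk0

end HasSimple

/-- The double of the cyclic quiver with a framing at `0`, the vertex `∞` being `none`. The arrows
`(some i, true)`, `(some i, false)`, `(none, true)` and `(none, false)` carry the maps `X i`, `Y i`,
`x` and `y` of an `FRep`. -/
def framedCyclic (ℓ : ℕ) : DoubleQuiver (Option (ZMod ℓ)) (Option (ZMod ℓ) × Bool) where
  src
    | (some i, true) => some (i + 1)
    | (some i, false) => some i
    | (none, true) => none
    | (none, false) => some 0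
  bar h := (h.1, !h.2)
  bar_bar := by simp
  sign h := if h.2 then 1 else -1
  sign_bar := by simp

namespace framedCyclic

variable {ℓ : ℕ}

@[simp] lemma src_some_true (i : ZMod ℓ) : (framedCyclic ℓ).src (some i, true) = some (i + 1) := rfl

@[simp] lemma src_some_false (i : ZMod ℓ) : (framedCyclic ℓ).src (some i, false) = some i := rfl

@[simp] lemma src_none_true : (framedCyclic ℓ).src (none, true) = none := rfl

@[simp] lemma src_none_false : (framedCyclic ℓ).src (none, false) = some 0 := rfl

@[simp] lemma tgt_some_true (i : ZMod ℓ) : (framedCyclic ℓ).tgt (some i, true) = some i := rfl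

@[simp] lemma tgt_some_false (i : ZMod ℓ) : (framedCyclic ℓ).tgt (some i, false) = some (i + 1) :=
  rfl

@[simp] lemma tgt_none_true : (framedCyclic ℓ).tgt (none, true) = some 0 := rfl

@[simp] lemma tgt_none_false : (framedCyclic ℓ).tgt (none, false) = none := rfl

lemma loopFree [Nontrivial (ZMod ℓ)] (j : ZMod ℓ) : (framedCyclic ℓ).LoopFree (some j) := by
  rintro ⟨_ | i, _ | _⟩ <;> simp +contextual [← eq_sub_iff_add_eq]

variable [NeZero ℓ]

lemma sum_tgt_some {M : Type*} [AddCommMonoid M] (j : ZMod ℓ)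
    (f : Option (ZMod ℓ) × Bool → M) :
    ∑ h with (framedCyclic ℓ).tgt h = some j, f h =
      f (some j, true) + f (some (j - 1), false) + if j = 0 then f (none, true) else 0 := by
  simp only [Finset.sum_filter, Fintype.sum_prod_type, Fintype.sum_bool, Fintype.sum_option,
    tgt_none_true, tgt_none_false, tgt_some_true, tgt_some_false, Option.some.injEq, reduceCtorEq,
    if_false, zero_add, ← eq_sub_iff_add_eq, Finset.sum_add_distrib, Finset.sum_ite_eq',
    Finset.mem_univ, if_true, eq_comm (a := (0 : ZMod ℓ))]
  abel

lemma sum_tgt_none {M : Type*} [AddCommMonoid M] (f : Option (ZMod ℓ) × Bool → M) :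
    ∑ h with (framedCyclic ℓ).tgt h = none, f h = f (none, false) := by
  simp [Finset.sum_filter, Fintype.sum_prod_type]

lemma reflectDim_some (j : ZMod ℓ) (d : ZMod ℓ → ℤ) :
    (framedCyclic ℓ).reflectDim (some j) (fun o => o.elim 1 d) =
      fun o => o.elim 1 (sInt ℓ j d) := by
  funext o
  obtain _ | i := o
  · simp [DoubleQuiver.reflectDim]
  · obtain rfl | hi := eq_or_ne i j
    · simp only [DoubleQuiver.reflectDim, sum_tgt_some, src_some_true, src_some_false,
        src_none_true, Option.elim_some, Option.elim_none, Function.update_self, sInt, if_true]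
      ring
    · simp [DoubleQuiver.reflectDim, sInt, hi]

lemma card_arrows_some (i j : ZMod ℓ) :
    (({h | (framedCyclic ℓ).tgt h = some i ∧ (framedCyclic ℓ).src h = some j} :
      Finset _).card : ℂ) =
      (if i = j - 1 then 1 else 0) + if i = j + 1 then 1 else 0 := by
  rw [← Finset.filter_filter, Finset.card_filter, sum_tgt_some]
  simp [eq_sub_iff_add_eq, sub_eq_iff_eq_add]

lemma reflectWeight_some (j : ZMod ℓ) (c : ℂ) (θ : ZMod ℓ → ℂ) :
    ∃ c', (framedCyclic ℓ).reflectWeight (some j) (fun o => o.elim c θ) =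
      fun o => o.elim c' (sC ℓ j θ) := by
  refine ⟨(framedCyclic ℓ).reflectWeight (some j) (fun o => o.elim c θ) none,
    funext fun o => ?_⟩
  obtain _ | i := o
  · rfl
  · obtain rfl | hi := eq_or_ne i j
    · simp [DoubleQuiver.reflectWeight, sC]
    · rw [DoubleQuiver.reflectWeight, Function.update_of_ne (by simpa using hi), card_arrows_some]
      simp [sC, hi]

end framedCyclic

/-- There is a simple representation of the framed cyclic quiver of weight `θ` on the cycle, with
dimension vector `d` on the cycle and `1` at `∞`. The weight `c` at `∞` is left free: on a
one-dimensional space the moment map relation only defines it. -/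
def HasFramedSimple (ℓ : ℕ) [NeZero ℓ] (θ : ZMod ℓ → ℂ) (d : ZMod ℓ → ℤ) : Prop :=
  ∃ c, HasSimple (framedCyclic ℓ) (fun o => o.elim c θ) (fun o => o.elim 1 d)

namespace HasFramedSimple

variable {ℓ : ℕ} [NeZero ℓ] {θ : ZMod ℓ → ℂ} {d : ZMod ℓ → ℤ}

lemma nonneg (hd : HasFramedSimple ℓ θ d) (i : ZMod ℓ) : 0 ≤ d i := by
  obtain ⟨c, hc⟩ := hd
  exact hc.nonneg (some i)

variable [Nontrivial (ZMod ℓ)]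

lemma reflect (hd : HasFramedSimple ℓ θ d) {j : ZMod ℓ} (hj : θ j ≠ 0) :
    HasFramedSimple ℓ (sC ℓ j θ) (sInt ℓ j d) := by
  obtain ⟨c, hc⟩ := hd
  obtain ⟨c', hc'⟩ := framedCyclic.reflectWeight_some j c θ
  have := hc.reflect (framedCyclic.loopFree j) hj
  rw [hc', framedCyclic.reflectDim_some] at this
  exact ⟨c', this⟩

lemma two_mul_le (hd : HasFramedSimple ℓ θ d) {j : ZMod ℓ} (hj : θ j = 0) :
    2 * d j ≤ (if j = 0 then 1 else 0) + d (j + 1) + d (j - 1) := by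
  obtain ⟨c, hc⟩ := hd
  have := hc.two_mul_le (framedCyclic.loopFree j) hj (k := none) (by simp) (by simp)
  rw [framedCyclic.sum_tgt_some] at this
  simp only [framedCyclic.src_some_true, framedCyclic.src_some_false, framedCyclic.src_none_true,
    Option.elim_some, Option.elim_none] at this
  linarith

end HasFramedSimple

section FramedRepresentations

/-! ### Framed representations as representations of the doubled framed quiver -/

lemma exists_injective_range_eq {K V W : Type*} [Field K] [AddCommGroup V] [Module K V]
    [FiniteDimensional K V] [AddCommGroup W] [Module K W] [FiniteDimensional K W]
    {p : Submodule K W} (h : Module.finrank K V = Module.finrank K p) :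
    ∃ f : V →ₗ[K] W, Function.Injective f ∧ LinearMap.range f = p := by
  let e := LinearEquiv.ofFinrankEq V p h
  refine ⟨p.subtype ∘ₗ e, p.subtype_injective.comp e.injective, ?_⟩
  rw [LinearMap.range_comp_of_range_eq_top _ e.range, Submodule.range_subtype]

lemma exists_restrict {R M N P Q : Type*} [Ring R] [AddCommGroup M] [Module R M]
    [AddCommGroup N] [Module R N] [AddCommGroup P] [Module R P] [AddCommGroup Q] [Module R Q]
    {i : M →ₗ[R] P} {j : N →ₗ[R] Q} (hj : Function.Injective j) (f : P →ₗ[R] Q)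
    (h : ∀ p ∈ LinearMap.range i, f p ∈ LinearMap.range j) :
    ∃ g : M →ₗ[R] N, ∀ m, f (i m) = j (g m) := by
  let F := (f ∘ₗ i).codRestrict (LinearMap.range j) fun m => h _ ⟨m, rfl⟩
  refine ⟨(LinearEquiv.ofInjective j hj).symm ∘ₗ F, fun m => ?_⟩
  exact (congrArg Subtype.val ((LinearEquiv.ofInjective j hj).apply_symm_apply (F m))).symm

variable {ℓ : ℕ} {d : ZMod ℓ → ℕ}

lemma apply_castMap {E : Type*} [AddCommGroup E] [Module ℂ E]
    (f : ∀ i, (Fin (d i) → ℂ) →ₗ[ℂ] E) {i j : ZMod ℓ} (h : i = j) (v : Fin (d i) → ℂ) :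
    f j (castMap d h v) = f i v := by
  subst h
  rfl

/-- Coordinates identifying maps `X`, `Y`, `x`, `y` as in an `FRep` with an action of the arrows of
`framedCyclic ℓ` on subspaces of `E`, no moment map relation being assumed. -/
structure Realization (X : ∀ i, (Fin (d (i + 1)) → ℂ) →ₗ[ℂ] (Fin (d i) → ℂ))
    (Y : ∀ i, (Fin (d i) → ℂ) →ₗ[ℂ] (Fin (d (i + 1)) → ℂ)) (x : ℂ →ₗ[ℂ] (Fin (d 0) → ℂ))
    (y : (Fin (d 0) → ℂ) →ₗ[ℂ] ℂ) {E : Type*} [AddCommGroup E] [Module ℂ E]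
    (space : Option (ZMod ℓ) → Submodule ℂ E) (map : Option (ZMod ℓ) × Bool → E →ₗ[ℂ] E) where
  ι : ∀ i, (Fin (d i) → ℂ) →ₗ[ℂ] E
  κ : ℂ →ₗ[ℂ] E
  injective_ι : ∀ i, Function.Injective (ι i)
  injective_κ : Function.Injective κ
  range_ι : ∀ i, LinearMap.range (ι i) = space (some i)
  range_κ : LinearMap.range κ = space none
  map_X : ∀ i v, map (some i, true) (ι (i + 1) v) = ι i (X i v)
  map_Y : ∀ i v, map (some i, false) (ι i v) = ι (i + 1) (Y i v)
  map_x : ∀ z, map (none, true) (κ z) = ι 0 (x z)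
  map_y : ∀ v, map (none, false) (ι 0 v) = κ (y v)

namespace Realization

section Moment

variable [NeZero ℓ] {X : ∀ i, (Fin (d (i + 1)) → ℂ) →ₗ[ℂ] (Fin (d i) → ℂ)}
  {Y : ∀ i, (Fin (d i) → ℂ) →ₗ[ℂ] (Fin (d (i + 1)) → ℂ)} {x : ℂ →ₗ[ℂ] (Fin (d 0) → ℂ)}
  {y : (Fin (d 0) → ℂ) →ₗ[ℂ] ℂ} {E : Type*} [AddCommGroup E] [Module ℂ E]
  {space : Option (ZMod ℓ) → Submodule ℂ E} {map : Option (ZMod ℓ) × Bool → E →ₗ[ℂ] E}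
  (φ : Realization X Y x y space map)

lemma moment_some (i : ZMod ℓ) (v : Fin (d (i + 1)) → ℂ) :
    ∑ h with (framedCyclic ℓ).tgt h = some (i + 1), (framedCyclic ℓ).sign h •
        map h (map ((framedCyclic ℓ).bar h) (φ.ι (i + 1) v)) =
      φ.ι (i + 1) ((X (i + 1) ∘ₗ Y (i + 1) - Y i ∘ₗ X i +
        (if h : i + 1 = (0 : ZMod ℓ) then castMap d h.symm ∘ₗ x ∘ₗ y ∘ₗ castMap d h
          else 0)) v) := by
  rw [framedCyclic.sum_tgt_some, add_sub_cancel_right]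
  simp only [framedCyclic, Bool.not_true, Bool.not_false, if_true, Bool.false_eq_true, if_false,
    one_smul, Units.neg_smul, φ.map_X, φ.map_Y, LinearMap.add_apply, LinearMap.sub_apply,
    LinearMap.comp_apply, map_add, map_sub, ← sub_eq_add_neg]
  split_ifs with h
  · rw [← apply_castMap φ.ι h v, φ.map_y, φ.map_x, LinearMap.comp_apply, LinearMap.comp_apply,
      LinearMap.comp_apply, apply_castMap φ.ι]
  · rw [LinearMap.zero_apply, map_zero]

lemma moment_none (z : ℂ) :
    ∑ h with (framedCyclic ℓ).tgt h = none, (framedCyclic ℓ).sign h •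
        map h (map ((framedCyclic ℓ).bar h) (φ.κ z)) = -φ.κ (y (x z)) := by
  rw [framedCyclic.sum_tgt_none]
  simp [framedCyclic, φ.map_x, φ.map_y, Units.neg_smul]

end Moment

variable [NeZero ℓ] {θ : ZMod ℓ → ℂ} {R : FRep ℓ θ d} {lam : Option (ZMod ℓ) → ℂ} {E : Type*}
  [AddCommGroup E] [Module ℂ E] {S : PreprojectiveRep (framedCyclic ℓ) lam E}
  (φ : Realization R.X R.Y R.x R.y S.space S.map)

include φ in
lemma finrank_space (o : Option (ZMod ℓ)) :
    (Module.finrank ℂ (S.space o) : ℤ) = o.elim 1 fun i => (d i : ℤ) := by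
  obtain _ | i := o
  · rw [← φ.range_κ, LinearMap.finrank_range_of_inj φ.injective_κ, Module.finrank_self]
    rfl
  · rw [← φ.range_ι, LinearMap.finrank_range_of_inj (φ.injective_ι i), Module.finrank_fin_fun]
    rfl

/-- The subrepresentation of `R` corresponding to one of `S`. -/
def comap {U : Option (ZMod ℓ) → Submodule ℂ E} (hU : S.IsSub U) : FSubrep R where
  U i := (U (some i)).comap (φ.ι i)
  Uinf := (U none).comap φ.κ
  hX i v hv := by
    rw [Submodule.mem_comap, ← φ.map_X]
    exact hU.map_mem (some i, true) _ hv
  hY i v hv := by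
    rw [Submodule.mem_comap, ← φ.map_Y]
    exact hU.map_mem (some i, false) _ hv
  hx z hz := by
    rw [Submodule.mem_comap, ← φ.map_x]
    exact hU.map_mem (none, true) _ hz
  hy v hv := by
    rw [Submodule.mem_comap, ← φ.map_y]
    exact hU.map_mem (none, false) _ hv

lemma isSub_map (T : FSubrep R) :
    S.IsSub fun o => o.elim (T.Uinf.map φ.κ) fun i => (T.U i).map (φ.ι i) := by
  refine ⟨fun o => ?_, ?_⟩
  · obtain _ | i := o
    · exact LinearMap.map_le_range.trans_eq φ.range_κ
    · exact LinearMap.map_le_range.trans_eq (φ.range_ι i)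
  · rintro ⟨_ | i, _ | _⟩ _ ⟨v, hv, rfl⟩
    · exact ⟨_, T.hy v hv, (φ.map_y v).symm⟩
    · exact ⟨_, T.hx v hv, (φ.map_x v).symm⟩
    · exact ⟨_, T.hY i v hv, (φ.map_Y i v).symm⟩
    · exact ⟨_, T.hX i v hv, (φ.map_X i v).symm⟩

include φ in
lemma isSimple (hR : FSimple R) : S.IsSimple := by
  intro U hU
  have hι (i : ZMod ℓ) : U (some i) = ((φ.comap hU).U i).map (φ.ι i) :=
    (Submodule.map_comap_eq_self ((hU.le _).trans_eq (φ.range_ι i).symm)).symm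
  have hκ : U none = (φ.comap hU).Uinf.map φ.κ :=
    (Submodule.map_comap_eq_self ((hU.le _).trans_eq φ.range_κ.symm)).symm
  rcases hR (φ.comap hU) with ⟨h, hinf⟩ | ⟨h, hinf⟩
  · refine .inl (funext fun o => ?_)
    obtain _ | i := o
    · rw [hκ, hinf, Submodule.map_bot, Pi.bot_apply]
    · rw [hι, h, Submodule.map_bot, Pi.bot_apply]
  · refine .inr (funext fun o => ?_)
    obtain _ | i := o
    · rw [hκ, hinf, Submodule.map_top, φ.range_κ]
    · rw [hι, h, Submodule.map_top, φ.range_ι]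

include φ in
lemma fSimple (hS : S.IsSimple) : FSimple R := by
  intro T
  rcases hS _ (φ.isSub_map T) with h | h
  · refine .inl ⟨fun i => ?_, ?_⟩
    · refine Submodule.map_injective_of_injective (φ.injective_ι i) ?_
      rw [Submodule.map_bot]
      exact congrFun h (some i)
    · refine Submodule.map_injective_of_injective φ.injective_κ ?_
      rw [Submodule.map_bot]
      exact congrFun h none
  · refine .inr ⟨fun i => ?_, ?_⟩
    · refine Submodule.map_injective_of_injective (φ.injective_ι i) ?_
      rw [Submodule.map_top, φ.range_ι]
      exact congrFun h (some i)
    · refine Submodule.map_injective_of_injective φ.injective_κ ?_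
      rw [Submodule.map_top, φ.range_κ]
      exact congrFun h none

variable (d) in
/-- The spaces `ℂ ^ d i` and `ℂ` inside their direct sum. -/
def directSumSpace : Option (ZMod ℓ) → Submodule ℂ ((∀ i, Fin (d i) → ℂ) × ℂ)
  | some i => LinearMap.range
      (LinearMap.inl ℂ (∀ i, Fin (d i) → ℂ) ℂ ∘ₗ LinearMap.single ℂ (fun i => Fin (d i) → ℂ) i)
  | none => LinearMap.range (LinearMap.inr ℂ (∀ i, Fin (d i) → ℂ) ℂ)

/-- The action of `X`, `Y`, `x` and `y` on the direct sum of the spaces `ℂ ^ d i` and `ℂ`. -/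
def directSumMap (X : ∀ i, (Fin (d (i + 1)) → ℂ) →ₗ[ℂ] (Fin (d i) → ℂ))
    (Y : ∀ i, (Fin (d i) → ℂ) →ₗ[ℂ] (Fin (d (i + 1)) → ℂ)) (x : ℂ →ₗ[ℂ] (Fin (d 0) → ℂ))
    (y : (Fin (d 0) → ℂ) →ₗ[ℂ] ℂ) :
    Option (ZMod ℓ) × Bool → ((∀ i, Fin (d i) → ℂ) × ℂ) →ₗ[ℂ] ((∀ i, Fin (d i) → ℂ) × ℂ)
  | (some i, true) => LinearMap.inl ℂ _ ℂ ∘ₗ LinearMap.single ℂ _ i ∘ₗ X i ∘ₗ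
      LinearMap.proj (i + 1) ∘ₗ LinearMap.fst ℂ _ ℂ
  | (some i, false) => LinearMap.inl ℂ _ ℂ ∘ₗ LinearMap.single ℂ _ (i + 1) ∘ₗ Y i ∘ₗ
      LinearMap.proj i ∘ₗ LinearMap.fst ℂ _ ℂ
  | (none, true) => LinearMap.inl ℂ _ ℂ ∘ₗ LinearMap.single ℂ _ 0 ∘ₗ x ∘ₗ LinearMap.snd ℂ _ ℂ
  | (none, false) => LinearMap.inr ℂ _ ℂ ∘ₗ y ∘ₗ LinearMap.proj 0 ∘ₗ LinearMap.fst ℂ _ ℂ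

/-- The tautological realization, on the direct sum of all the spaces. -/
def directSum (X : ∀ i, (Fin (d (i + 1)) → ℂ) →ₗ[ℂ] (Fin (d i) → ℂ))
    (Y : ∀ i, (Fin (d i) → ℂ) →ₗ[ℂ] (Fin (d (i + 1)) → ℂ)) (x : ℂ →ₗ[ℂ] (Fin (d 0) → ℂ))
    (y : (Fin (d 0) → ℂ) →ₗ[ℂ] ℂ) :
    Realization X Y x y (directSumSpace d) (directSumMap X Y x y) where
  ι i := LinearMap.inl ℂ (∀ i, Fin (d i) → ℂ) ℂ ∘ₗ LinearMap.single ℂ (fun i => Fin (d i) → ℂ) i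
  κ := LinearMap.inr ℂ (∀ i, Fin (d i) → ℂ) ℂ
  injective_ι i :=
    LinearMap.inl_injective.comp (Pi.single_injective (M := fun i => Fin (d i) → ℂ) i)
  injective_κ := LinearMap.inr_injective
  range_ι _ := rfl
  range_κ := rfl
  map_X i v := by simp [directSumMap]
  map_Y i v := by simp [directSumMap]
  map_x z := by simp [directSumMap]
  map_y v := by simp [directSumMap]

end Realization

lemma exists_realization {E : Type*} [AddCommGroup E] [Module ℂ E] [FiniteDimensional ℂ E]
    {space : Option (ZMod ℓ) → Submodule ℂ E} {map : Option (ZMod ℓ) × Bool → E →ₗ[ℂ] E}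
    (hmap : ∀ h, ∀ v ∈ space ((framedCyclic ℓ).src h), map h v ∈ space ((framedCyclic ℓ).tgt h))
    (hspace : ∀ i, Module.finrank ℂ (space (some i)) = d i)
    (hspace_none : Module.finrank ℂ (space none) = 1) :
    ∃ X Y x y, Nonempty (Realization (d := d) X Y x y space map) := by
  have hι (i : ZMod ℓ) := exists_injective_range_eq (V := Fin (d i) → ℂ) (p := space (some i))
    (by rw [Module.finrank_fin_fun, hspace])
  choose ι hι hrange using hι
  obtain ⟨κ, hκ, hrange_none⟩ := exists_injective_range_eq (V := ℂ) (p := space none)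
    (by rw [Module.finrank_self, hspace_none])
  have hX (i : ZMod ℓ) := exists_restrict (i := ι (i + 1)) (hι i) (map (some i, true))
    (by rw [hrange, hrange]; exact hmap (some i, true))
  have hY (i : ZMod ℓ) := exists_restrict (i := ι i) (hι (i + 1)) (map (some i, false))
    (by rw [hrange, hrange]; exact hmap (some i, false))
  obtain ⟨x, hx⟩ := exists_restrict (i := κ) (hι 0) (map (none, true))
    (by rw [hrange, hrange_none]; exact hmap (none, true))
  obtain ⟨y, hy⟩ := exists_restrict (i := ι 0) hκ (map (none, false))
    (by rw [hrange, hrange_none]; exact hmap (none, false))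
  choose X hX using hX
  choose Y hY using hY
  exact ⟨X, Y, x, y, ⟨ι, κ, hι, hκ, hrange, hrange_none, hX, hY, hx, hy⟩⟩

variable [NeZero ℓ] {θ : ZMod ℓ → ℂ}

/-- The direct sum realization of `R` satisfies the moment map relations, the one at `∞` for the
weight `-y (x 1)`. -/
def FRep.toPreprojectiveRep (R : FRep ℓ θ d) :
    PreprojectiveRep (framedCyclic ℓ) (fun o => o.elim (-R.y (R.x 1)) θ)
      ((∀ i, Fin (d i) → ℂ) × ℂ) where
  space := Realization.directSumSpace d
  map := Realization.directSumMap R.X R.Y R.x R.y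
  map_mem := by
    rintro ⟨_ | i, _ | _⟩ v - <;> exact ⟨_, rfl⟩
  moment := by
    rintro (_ | j) _ ⟨v, rfl⟩
    · refine ((Realization.directSum R.X R.Y R.x R.y).moment_none v).trans ?_
      rw [← mul_one v, ← smul_eq_mul, map_smul, map_smul, map_smul, map_smul, smul_comm]
      simp [Realization.directSum, mul_comm]
    · obtain ⟨i, rfl⟩ : ∃ i, i + 1 = j := ⟨j - 1, sub_add_cancel j 1⟩
      refine ((Realization.directSum R.X R.Y R.x R.y).moment_some i v).trans ?_
      rw [R.rel i, LinearMap.smul_apply, map_smul]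
      rfl

lemma PreprojectiveRep.exists_fRep {c : ℂ} {E : Type*} [AddCommGroup E] [Module ℂ E]
    [FiniteDimensional ℂ E] (S : PreprojectiveRep (framedCyclic ℓ) (fun o => o.elim c θ) E)
    (hS : ∀ o, (Module.finrank ℂ (S.space o) : ℤ) = o.elim 1 fun i => (d i : ℤ)) :
    ∃ R : FRep ℓ θ d, Nonempty (Realization R.X R.Y R.x R.y S.space S.map) := by
  obtain ⟨X, Y, x, y, ⟨φ⟩⟩ := exists_realization (d := d) S.map_mem
    (fun i => Nat.cast_injective (R := ℤ) (hS (some i)))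
    (Nat.cast_injective (R := ℤ) ((hS none).trans Nat.cast_one.symm))
  refine ⟨⟨X, Y, x, y, fun i => LinearMap.ext fun v => φ.injective_ι (i + 1) ?_⟩, ⟨φ⟩⟩
  have hv : φ.ι (i + 1) v ∈ S.space (some (i + 1)) := φ.range_ι (i + 1) ▸ ⟨v, rfl⟩
  rw [← φ.moment_some i v, S.moment _ _ hv, LinearMap.smul_apply, map_smul]
  rfl

lemma mem_Eset_iff : d ∈ Eset ℓ θ ↔ HasFramedSimple ℓ θ fun i => (d i : ℤ) := by
  constructor
  · rintro ⟨R, hR⟩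
    have φ : Realization R.X R.Y R.x R.y R.toPreprojectiveRep.space R.toPreprojectiveRep.map :=
      .directSum R.X R.Y R.x R.y
    exact ⟨_, _, _, _, inferInstance, R.toPreprojectiveRep, φ.isSimple hR, φ.finrank_space⟩
  · rintro ⟨c, E, _, _, _, S, hS, hdim⟩
    obtain ⟨R, ⟨φ⟩⟩ := S.exists_fRep hdim
    exact ⟨R, φ.fSimple hS⟩

end FramedRepresentations

section Cyclic

/-! ### Functions on a cycle -/

lemma cyclic_monotone {α : Type*} [Preorder α] {ℓ : ℕ} [NeZero ℓ] {f : ZMod ℓ → α}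
    (h : ∀ i, i + 1 ≠ 0 → f i ≤ f (i + 1)) (i : ZMod ℓ) : f 0 ≤ f i ∧ f i ≤ f (-1) := by
  obtain _ | n := ℓ
  · exact absurd rfl (NeZero.ne 0)
  have hmono : Monotone (α := Fin (n + 1)) f := by
    refine Fin.monotone_iff_le_succ.2 fun k => ?_
    have hk : k.castSucc + 1 = k.succ := Fin.coeSucc_eq_succ
    exact hk ▸ h k.castSucc (hk.trans_ne k.succ_ne_zero)
  refine ⟨hmono (Fin.zero_le i), hmono (Fin.le_def.2 ?_)⟩
  exact (Nat.le_of_lt_succ i.isLt).trans_eq Fin.coe_neg_one.symm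

lemma sum_range_natCast_zmod {M : Type*} [AddCommMonoid M] {ℓ : ℕ} [NeZero ℓ] (f : ZMod ℓ → M) :
    ∑ k ∈ Finset.range ℓ, f k = ∑ i, f i :=
  Finset.sum_bij' (fun k _ => (k : ZMod ℓ)) (fun i _ => i.val) (by simp)
    (fun i _ => Finset.mem_range.2 i.val_lt)
    (fun _ hk => ZMod.val_cast_of_lt (Finset.mem_range.1 hk)) (fun i _ => ZMod.natCast_zmod_val i)
    (fun _ _ => rfl)

lemma exists_cyclic_sub_eq {G : Type*} [AddCommGroup G] {ℓ : ℕ} [NeZero ℓ] {f : ZMod ℓ → G}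
    (hf : ∑ i, f i = 0) : ∃ c : ZMod ℓ → G, c 0 = 0 ∧ ∀ i, c (i + 1) - c i = f i := by
  let s (m : ℕ) : G := ∑ k ∈ Finset.range m, f k
  have hs : Function.Periodic s ℓ := fun m => by
    simp only [s]
    rw [add_comm m, Finset.sum_range_add, sum_range_natCast_zmod, hf, zero_add]
    simp
  refine ⟨fun i => s i.val, by simp [s], fun i => ?_⟩
  have hi : i + 1 = ((i.val + 1 : ℕ) : ZMod ℓ) := by simp
  dsimp only
  rw [hi, ZMod.val_natCast, hs.map_mod_nat, sub_eq_iff_eq_add']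
  simp [s, Finset.sum_range_succ]

lemma eq_apply_zero_of_two_mul_le {ℓ : ℕ} [NeZero ℓ] {a : ZMod ℓ → ℤ}
    (ha : ∀ j, 2 * a j ≤ (if j = 0 then 1 else 0) + a (j + 1) + a (j - 1)) (i : ZMod ℓ) :
    a i = a 0 := by
  let b (i : ZMod ℓ) := a (i + 1) - a i
  have hsum : ∑ i, b i = 0 := by
    rw [Finset.sum_sub_distrib, sub_eq_zero]
    exact Equiv.sum_comp (Equiv.addRight 1) a
  have hb (i : ZMod ℓ) : b 0 ≤ b i ∧ b i ≤ b (-1) := by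
    refine cyclic_monotone (fun i hi => ?_) i
    have := ha (i + 1)
    rw [if_neg hi, add_sub_cancel_right] at this
    simp only [b]
    linarith
  have hwrap : b (-1) ≤ b 0 + 1 := by
    have := ha 0
    simp only [b, if_pos, zero_add, zero_sub, neg_add_cancel] at this ⊢
    linarith
  have hb₀ : 0 ≤ b 0 := by
    by_contra! hneg
    have hneg_all (i : ZMod ℓ) : b i ≤ 0 := by linarith [(hb i).2]
    exact (Finset.sum_neg' (fun i _ => hneg_all i) ⟨0, Finset.mem_univ 0, hneg⟩).ne hsum
  have hb_zero (i : ZMod ℓ) : b i = 0 :=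
    (Finset.sum_eq_zero_iff_of_nonneg fun i _ => hb₀.trans (hb i).1).1 hsum i (Finset.mem_univ i)
  have hstep (i : ZMod ℓ) : a (i + 1) = a i := sub_eq_zero.1 (hb_zero i)
  obtain ⟨hle, hge⟩ := cyclic_monotone (fun i _ => (hstep i).ge) i
  have hlast : a 0 = a (-1) := by simpa using hstep (-1)
  exact le_antisymm (hge.trans_eq hlast.symm) hle

end Cyclic

section CalogeroMoser

/-! ### Calogero–Moser representations -/

variable {K ι : Type*} [Field K]

lemma mul_mem_of_injective [Finite ι] {p : Submodule K (ι → K)} {lam : ι → K}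
    (hlam : Function.Injective lam) (hp : ∀ v ∈ p, lam * v ∈ p) {v : ι → K} (hv : v ∈ p)
    (w : ι → K) : w * v ∈ p := by
  classical
  cases nonempty_fintype ι
  have hpoly (P : Polynomial K) : Polynomial.aeval lam P * v ∈ p := by
    induction P using Polynomial.induction_on with
    | C a => simpa [Algebra.algebraMap_eq_smul_one] using p.smul_mem a hv
    | add P Q hP hQ => simpa [add_mul] using add_mem hP hQ
    | monomial n a h =>
      have hmul : Polynomial.aeval lam (Polynomial.C a * Polynomial.X ^ (n + 1)) * v =
          lam * (Polynomial.aeval lam (Polynomial.C a * Polynomial.X ^ n) * v) := by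
        simp only [map_mul, map_pow, Polynomial.aeval_C, Polynomial.aeval_X]
        ring
      exact hmul ▸ hp _ h
  have hw : Polynomial.aeval lam (Lagrange.interpolate Finset.univ lam w) = w := by
    funext a
    rw [Polynomial.aeval_pi_apply₂, Polynomial.coe_aeval_eq_eval]
    exact Lagrange.eval_interpolate_at_node w hlam.injOn (Finset.mem_univ a)
  exact hw ▸ hpoly _

variable [Fintype ι]

/-- The Calogero–Moser matrix with coupling `σ` and distinct positions `lam`. Its diagonal, where
the momenta would stand, vanishes because `σ / 0 = 0`. -/
def calogeroMoser (σ : K) (lam : ι → K) : Matrix ι ι K := .of fun a b => σ / (lam b - lam a)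

lemma calogeroMoser_relation (σ : K) {lam : ι → K} (hlam : Function.Injective lam) (v : ι → K) :
    lam * (calogeroMoser σ lam).mulVec v - (calogeroMoser σ lam).mulVec (lam * v) +
      (fun _ => σ * ∑ b, v b) = σ • v := by
  classical
  funext a
  have hterm (b : ι) : lam a * (σ / (lam b - lam a) * v b) - σ / (lam b - lam a) * (lam b * v b) +
      σ * v b = if b = a then σ * v a else 0 := by
    split_ifs with hab
    · simp [hab]
    · have : lam b - lam a ≠ 0 := sub_ne_zero.2 (hlam.ne hab)
      field_simp
      ring
  calc _ = ∑ b, (lam a * (σ / (lam b - lam a) * v b) - σ / (lam b - lam a) * (lam b * v b) +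
        σ * v b) := by
        simp only [Finset.sum_add_distrib, Finset.sum_sub_distrib, ← Finset.mul_sum]
        rfl
    _ = _ := by simp [hterm]

variable {ℓ n : ℕ} {θ c : ZMod ℓ → ℂ} {σ : ℂ} {lam : Fin n → ℂ}

lemma castMap_const {i j : ZMod ℓ} (h : i = j) :
    castMap (fun _ : ZMod ℓ => n) h = LinearMap.id := rfl

/-- The maps `X i` of the Calogero–Moser representation: the position operator `v ↦ lam * v` at
the framed vertex, the identity elsewhere. -/
def calogeroMoserX (lam : Fin n → ℂ) (i : ZMod ℓ) : (Fin n → ℂ) →ₗ[ℂ] (Fin n → ℂ) :=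
  if i = 0 then LinearMap.mulLeft ℂ lam else LinearMap.id

/-- The maps `Y i` of the Calogero–Moser representation: the Calogero–Moser matrix itself
at the framed vertex, elsewhere its product with the position operator, shifted by the scalar
`c i`. -/
noncomputable def calogeroMoserY (σ : ℂ) (lam : Fin n → ℂ) (c : ZMod ℓ → ℂ) (i : ZMod ℓ) :
    (Fin n → ℂ) →ₗ[ℂ] (Fin n → ℂ) :=
  if i = 0 then (calogeroMoser σ lam).mulVecLin
  else (calogeroMoser σ lam).mulVecLin ∘ₗ LinearMap.mulLeft ℂ lam + c i • LinearMap.id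

lemma calogeroMoserX_zero (v : Fin n → ℂ) : calogeroMoserX lam (0 : ZMod ℓ) v = lam * v := by
  simp [calogeroMoserX]

lemma calogeroMoserX_of_ne {i : ZMod ℓ} (hi : i ≠ 0) (v : Fin n → ℂ) :
    calogeroMoserX lam i v = v := by
  simp [calogeroMoserX, hi]

lemma calogeroMoserY_zero (v : Fin n → ℂ) :
    calogeroMoserY σ lam c 0 v = (calogeroMoser σ lam).mulVec v := by
  simp [calogeroMoserY]

lemma calogeroMoserY_of_ne {i : ZMod ℓ} (hi : i ≠ 0) (v : Fin n → ℂ) :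
    calogeroMoserY σ lam c i v = (calogeroMoser σ lam).mulVec (lam * v) + c i • v := by
  simp [calogeroMoserY, hi]

lemma calogeroMoserY_calogeroMoserX (hc₀ : c 0 = 0) (i : ZMod ℓ) (v : Fin n → ℂ) :
    calogeroMoserY σ lam c i (calogeroMoserX lam i v) =
      (calogeroMoser σ lam).mulVec (lam * v) + c i • v := by
  obtain rfl | hi := eq_or_ne i 0
  · rw [calogeroMoserX_zero, calogeroMoserY_zero, hc₀, zero_smul, add_zero]
  · rw [calogeroMoserX_of_ne hi, calogeroMoserY_of_ne hi]

/-- The representation of dimension `n` at every vertex of the cycle built from the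
Calogero–Moser relation for the coupling `σ`. The scalars `c` spread the weight `θ` along the
cycle. -/
noncomputable def calogeroMoserRep (hlam : Function.Injective lam) (hc₀ : c 0 = 0)
    (hc : ∀ i, c (i + 1) - c i = θ (i + 1) - if i + 1 = 0 then σ else 0) :
    FRep ℓ θ fun _ => n where
  X := calogeroMoserX lam
  Y := calogeroMoserY σ lam c
  x := LinearMap.toSpanSingleton ℂ _ 1
  y := σ • ∑ a, LinearMap.proj a
  rel i := by
    refine LinearMap.ext fun v => ?_
    simp only [castMap_const, LinearMap.id_comp, LinearMap.comp_id, LinearMap.add_apply,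
      LinearMap.sub_apply, LinearMap.comp_apply, calogeroMoserY_calogeroMoserX hc₀,
      LinearMap.smul_apply, LinearMap.id_apply]
    have hθ := sub_eq_iff_eq_add.1 (hc i).symm
    by_cases hi : i + 1 = 0
    · have hxy : LinearMap.toSpanSingleton ℂ (Fin n → ℂ) 1
          ((σ • ∑ a, LinearMap.proj a : (Fin n → ℂ) →ₗ[ℂ] ℂ) v) = fun _ => σ * ∑ a, v a := by
        funext
        simp
      rw [if_pos hi, hi, hc₀, zero_sub] at hθ
      rw [dif_pos hi, hi, calogeroMoserX_zero, calogeroMoserY_zero, LinearMap.comp_apply, hxy, hθ,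
        add_smul, neg_smul, ← calogeroMoser_relation σ hlam v]
      abel
    · rw [if_neg hi, add_zero] at hθ
      rw [dif_neg hi, calogeroMoserX_of_ne hi, calogeroMoserY_of_ne hi, hθ, sub_smul,
        LinearMap.zero_apply]
      abel

lemma fSimple_calogeroMoserRep [NeZero ℓ] (hlam : Function.Injective lam) (hc₀ : c 0 = 0)
    (hc : ∀ i, c (i + 1) - c i = θ (i + 1) - if i + 1 = 0 then σ else 0) (hσ : σ ≠ 0)
    (hlam₀ : ∀ a, lam a ≠ 0) : FSimple (calogeroMoserRep hlam hc₀ hc) := by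
  intro T
  have hstep (i : ZMod ℓ) (hi : i ≠ 0) : T.U (i + 1) ≤ T.U i := fun v hv => by
    simpa only [calogeroMoserRep, calogeroMoserX_of_ne hi] using T.hX i v hv
  have hL {v : Fin n → ℂ} (hv : v ∈ T.U (0 + 1)) : lam * v ∈ T.U 0 := by
    simpa only [calogeroMoserRep, calogeroMoserX_zero] using T.hX 0 v hv
  have hmono := cyclic_monotone (f := fun i => OrderDual.toDual (T.U (i + 1)))
    fun i hi => hstep (i + 1) hi
  have hlower (i : ZMod ℓ) : T.U 0 ≤ T.U i := by
    simpa using (hmono (i - 1)).2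
  have hupper (i : ZMod ℓ) : T.U i ≤ T.U (0 + 1) := by
    simpa using (hmono (i - 1)).1
  have hmul {v : Fin n → ℂ} (hv : v ∈ T.U (0 + 1)) (w : Fin n → ℂ) : w * v ∈ T.U (0 + 1) :=
    mul_mem_of_injective hlam (fun v hv => hlower _ (hL hv)) hv w
  have heq (i : ZMod ℓ) : T.U i = T.U 0 := by
    refine le_antisymm ((hupper i).trans fun v hv => ?_) (hlower i)
    have hinv : lam * (lam⁻¹ * v) = v := by
      funext a
      simp [hlam₀ a]
    exact hinv ▸ hL (hmul hv lam⁻¹)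
  have hmul₀ {v : Fin n → ℂ} (hv : v ∈ T.U 0) (w : Fin n → ℂ) : w * v ∈ T.U 0 :=
    heq (0 + 1) ▸ hmul (hlower _ hv) w
  rcases eq_bot_or_eq_top T.Uinf with h | h
  · refine .inl ⟨fun i => (heq i).trans ((Submodule.eq_bot_iff _).2 fun v hv => ?_), h⟩
    funext a
    have hy : σ * v a = 0 := by
      simpa [h, calogeroMoserRep, Pi.single_apply] using T.hy _ (hmul₀ hv (Pi.single a 1))
    exact (mul_eq_zero_iff_left hσ).1 hy
  · refine .inr ⟨fun i => (heq i).trans (eq_top_iff.2 fun w _ => ?_), h⟩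
    have hx : (1 : Fin n → ℂ) ∈ T.U 0 := by
      simpa [calogeroMoserRep] using T.hx 1 (h ▸ Submodule.mem_top)
    simpa using hmul₀ hx w

lemma const_mem_Eset [NeZero ℓ] (hθ : ∑ i, θ i ≠ 0) (n : ℕ) : (fun _ => n) ∈ Eset ℓ θ := by
  have hsum : ∑ i, (θ (i + 1) - if i + 1 = 0 then ∑ k, θ k else 0) = 0 := by
    refine (Equiv.sum_comp (Equiv.addRight 1) fun i => θ i - if i = 0 then ∑ k, θ k else 0).trans ?_
    simp
  obtain ⟨c, hc₀, hc⟩ := exists_cyclic_sub_eq hsum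
  have hlam : Function.Injective fun a : Fin n => (a + 1 : ℂ) := fun a b hab => by
    simpa [Fin.val_inj] using hab
  exact ⟨calogeroMoserRep hlam hc₀ hc,
    fSimple_calogeroMoserRep hlam hc₀ hc hθ fun a => Nat.cast_add_one_ne_zero a⟩

end CalogeroMoser

section Descent

/-! ### Descent along reflections -/

variable {ℓ : ℕ} {d : ZMod ℓ → ℤ} {θ : ZMod ℓ → ℂ} {j : ZMod ℓ}

lemma sInt_of_ne {i : ZMod ℓ} (hi : i ≠ j) (d : ZMod ℓ → ℤ) : sInt ℓ j d i = d i :=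
  if_neg hi

lemma sInt_self (j : ZMod ℓ) (d : ZMod ℓ → ℤ) :
    sInt ℓ j d j = (if j = 0 then 1 else 0) + d (j + 1) + d (j - 1) - d j :=
  if_pos rfl

lemma sum_sInt_lt [NeZero ℓ] (h : sInt ℓ j d j < d j) : ∑ i, sInt ℓ j d i < ∑ i, d i := by
  refine Finset.sum_lt_sum (fun i _ => ?_) ⟨j, Finset.mem_univ j, h⟩
  obtain rfl | hi := eq_or_ne i j
  · exact h.le
  · exact (sInt_of_ne hi d).le

lemma sC_self (j : ZMod ℓ) (θ : ZMod ℓ → ℂ) : sC ℓ j θ j = -θ j := if_pos rfl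

variable [Nontrivial (ZMod ℓ)]

lemma sInt_sInt (j : ZMod ℓ) (d : ZMod ℓ → ℤ) : sInt ℓ j (sInt ℓ j d) = d := by
  funext i
  obtain rfl | hi := eq_or_ne i j
  · rw [sInt_self, sInt_self, sInt_of_ne (by simp), sInt_of_ne (by simp)]
    ring
  · rw [sInt_of_ne hi, sInt_of_ne hi]

lemma sC_apply (j : ZMod ℓ) (θ : ZMod ℓ → ℂ) (i : ZMod ℓ) :
    sC ℓ j θ i = θ i + ((if i = j - 1 then 1 else 0) + (if i = j + 1 then 1 else 0) -
      if i = j then 2 else 0) * θ j := by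
  obtain rfl | hi := eq_or_ne i j
  · simp only [sC, if_true, eq_sub_iff_add_eq, add_eq_left, left_eq_add, one_ne_zero, if_false]
    ring
  · simp [sC, hi]

lemma sC_sC (j : ZMod ℓ) (θ : ZMod ℓ → ℂ) : sC ℓ j (sC ℓ j θ) = θ := by
  funext i
  rw [sC_apply, sC_self, sC_apply]
  ring

variable [NeZero ℓ]

lemma sum_sC (j : ZMod ℓ) (θ : ZMod ℓ → ℂ) : ∑ i, sC ℓ j θ i = ∑ i, θ i := by
  simp only [sC_apply, Finset.sum_add_distrib, ← Finset.sum_mul, Finset.sum_sub_distrib,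
    Finset.sum_ite_eq', Finset.mem_univ, if_true]
  norm_num

lemma hasFramedSimple_reflect_iff (hj : θ j ≠ 0) :
    HasFramedSimple ℓ (sC ℓ j θ) (sInt ℓ j d) ↔ HasFramedSimple ℓ θ d := by
  refine ⟨fun h => ?_, fun h => h.reflect hj⟩
  have := h.reflect (j := j) (by rwa [sC_self, neg_ne_zero])
  rwa [sC_sC, sInt_sInt] at this

lemma hasFramedSimple_iff_of_eqvGen {p q : (ZMod ℓ → ℤ) × (ZMod ℓ → ℂ)}
    (h : Relation.EqvGen (MoveRel ℓ) p q) :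
    HasFramedSimple ℓ p.2 p.1 ↔ HasFramedSimple ℓ q.2 q.1 := by
  refine iff_of_eq (congrArg (Quot.lift (fun p => HasFramedSimple ℓ p.2 p.1) ?_)
    (Quot.eqvGen_sound h))
  rintro p _ ⟨j, hj, rfl⟩
  exact propext (hasFramedSimple_reflect_iff hj).symm

lemma sum_eq_of_eqvGen {p q : (ZMod ℓ → ℤ) × (ZMod ℓ → ℂ)}
    (h : Relation.EqvGen (MoveRel ℓ) p q) : ∑ i, p.2 i = ∑ i, q.2 i := by
  refine congrArg (Quot.lift (fun p => ∑ i, p.2 i) ?_) (Quot.eqvGen_sound h)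
  rintro p _ ⟨j, -, rfl⟩
  exact (sum_sC j p.2).symm

lemma HasFramedSimple.eq_const (hd : HasFramedSimple ℓ θ d)
    (hmin : ∀ j, θ j ≠ 0 → d j ≤ sInt ℓ j d j) : ∃ n : ℕ, d = fun _ => (n : ℤ) := by
  obtain ⟨n, hn⟩ := Int.eq_ofNat_of_zero_le (hd.nonneg 0)
  refine ⟨n, funext fun i => (eq_apply_zero_of_two_mul_le (fun j => ?_) i).trans hn⟩
  by_cases hj : θ j = 0
  · exact hd.two_mul_le hj
  · have := hmin j hj
    rw [sInt_self] at this
    linarith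

lemma HasFramedSimple.exists_eqvGen_const (hd : HasFramedSimple ℓ θ d) :
    ∃ (n : ℕ) (θ' : ZMod ℓ → ℂ),
      Relation.EqvGen (MoveRel ℓ) (d, θ) ((fun _ => (n : ℤ)), θ') := by
  induction hN : (∑ i, d i).toNat using Nat.strong_induction_on generalizing d θ with
  | _ N ih =>
    by_cases hmin : ∀ j, θ j ≠ 0 → d j ≤ sInt ℓ j d j
    · obtain ⟨n, rfl⟩ := hd.eq_const hmin
      exact ⟨n, θ, .refl _⟩
    · push Not at hmin
      obtain ⟨j, hj, hlt⟩ := hmin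
      have hd' := hd.reflect hj
      have hsum := sum_sInt_lt hlt
      have hnonneg : 0 ≤ ∑ i, sInt ℓ j d i := Finset.sum_nonneg fun i _ => hd'.nonneg i
      obtain ⟨n, θ', h⟩ := ih _ (by omega) hd' rfl
      exact ⟨n, θ', .trans _ _ _ (.rel _ _ ⟨j, hj, rfl⟩) h⟩

end Descent

/-- For `∑ θ_i ≠ 0`: `d ∈ E_θ` iff the pair `(d, θ)` is equivalent
(under the smallest equivalence relation generated by the moves above) to a pair
`(n·δ_ℓ, θ')` with `n ≥ 0`. -/
theorem mem_Eset_iff_equiv_ndelta (ℓ : ℕ) [NeZero ℓ] (hℓ : 2 ≤ ℓ) (θ : ZMod ℓ → ℂ)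
    (ha : ∑ i : ZMod ℓ, θ i ≠ 0) (d : ZMod ℓ → ℕ) :
    d ∈ Eset ℓ θ ↔
      ∃ (n : ℕ) (θ' : ZMod ℓ → ℂ),
        Relation.EqvGen (MoveRel ℓ) ((fun i => (d i : ℤ)), θ) ((fun _ => (n : ℤ)), θ') := by
  have : Fact (1 < ℓ) := ⟨hℓ⟩
  rw [mem_Eset_iff]
  refine ⟨fun hd => hd.exists_eqvGen_const, ?_⟩
  rintro ⟨n, θ', h⟩
  have hθ' : ∑ i, θ' i ≠ 0 := sum_eq_of_eqvGen h ▸ ha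
  exact (hasFramedSimple_iff_of_eqvGen h).2 (mem_Eset_iff.1 (const_mem_Eset hθ' n))

end CM
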